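/- arXiv:2211.11877 — 2 statements merged into one kernel-verified Lean document; each statement's English description precedes it below -/
import Mathlib

section
/- Define finite words b_N over {a,b} by b_0 = ε (the empty word) and b_{N+1} = φ(b_N)·a. Then for every N ≥ 1: b_N is a prefix of the Fibonacci word f and a bispecial factor of f; the Parikh vector of b_N is (F_{N+2} − 1, F_{N+1} − 1); the prefix return word r_N to b_N in f has Parikh vector (F_{N+1}, F_N); and every return word to b_N in f other than r_N has Parikh vector (F_N, F_{N−1}). -/
/-!
The Fibonacci word `f` is the concatenation of the blocks `φ(f 0), φ(f 1), …`; let `pos i` be the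
index at which the `i`-th block starts. Since `φ(a) = ab` and `φ(b) = a`, an index carries the
letter `a` exactly when a block starts there, and the letter after it tells which block it is.
Hence `f` can be desubstituted uniquely: `φ(w)a` occurs at `j` if and only if `j = pos i` for some
occurrence `i` of `w` (`occursAt_phiW_iff`).

Everything then follows by induction on `N` from `b_0 = ε`. Occurrences of `b_{N+1}` are the images
under `pos` of those of `b_N`, so the return words to `b_{N+1}` are exactly the images under `φ` of
the return words to `b_N`; and `φ` sends a word with Parikh vector `(x, y)` to one with Parikh
vector `(x + y, x)`, which is the Fibonacci recurrence. Applying `φ` to the one-letter extensions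
`b_N a`, `b_N b`, `a b_N`, `b b_N` gives the extensions of `b_{N+1}`.
The return words to `ε` are the letters.
-/


open Filter

/-- The golden mean τ = (1+√5)/2. -/
noncomputable def tau : ℝ := (1 + Real.sqrt 5) / 2

/-- The Fibonacci morphism φ on the alphabet {a, b}; we encode a = `false`, b = `true`,
so φ(a) = ab and φ(b) = a. -/
def phi : Bool → List Bool
  | false => [false, true]
  | true  => [false]

/-- Application of the morphism φ to a finite word. -/
def phiW (w : List Bool) : List Bool := w.flatMap phi

/-- φⁿ(a). -/
def phiIter (n : ℕ) : List Bool := phiW^[n] [false]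

/-- The Fibonacci word, i.e. the fixed point of φ beginning with a (= `false`):
the unique sequence having φⁿ(a) as a prefix for every n. -/
def fibWord (i : ℕ) : Bool := (phiIter (i + 1)).getD i false

/-- The factor of the sequence `u` of length `n` occurring at index `i`. -/
def factorAt {α : Type*} (u : ℕ → α) (i n : ℕ) : List α :=
  (List.range n).map fun k => u (i + k)

/-- The finite word `w` occurs in the sequence `u` at index `i`. -/
def OccursAt {α : Type*} (u : ℕ → α) (w : List α) (i : ℕ) : Prop :=
  factorAt u i w.length = w

/-- `w` is a factor of the sequence `u`. -/
def IsFactor {α : Type*} (u : ℕ → α) (w : List α) : Prop :=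
  ∃ i, OccursAt u w i

/-- `v` is the return word to `w` in `u` occurring at index `i`: `i` and `j = i + |v|`
are consecutive occurrences of `w` in `u`, and `v = u_i u_{i+1} ⋯ u_{j-1}`. -/
def IsReturnWordAt {α : Type*} (u : ℕ → α) (w v : List α) (i : ℕ) : Prop :=
  ∃ j, i < j ∧ OccursAt u w i ∧ OccursAt u w j ∧
    (∀ m, i < m → m < j → ¬ OccursAt u w m) ∧ v = factorAt u i (j - i)

/-- `v` is a return word to `w` in `u`. -/
def IsReturnWord {α : Type*} (u : ℕ → α) (w v : List α) : Prop :=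
  ∃ i, IsReturnWordAt u w v i

/-- The factor `w` of `u` is bispecial: it can be extended to the right by two distinct
letters and to the left by two distinct letters. -/
def IsBispecial {α : Type*} (u : ℕ → α) (w : List α) : Prop :=
  IsFactor u w ∧
  (∃ x y : α, x ≠ y ∧ IsFactor u (w ++ [x]) ∧ IsFactor u (w ++ [y])) ∧
  (∃ z t : α, z ≠ t ∧ IsFactor u (z :: w) ∧ IsFactor u (t :: w))

/-- The bispecial prefixes of the Fibonacci word: b_0 = ε, b_{N+1} = φ(b_N)·a. -/
def bN : ℕ → List Bool
  | 0 => []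
  | N + 1 => phiW (bN N) ++ [false]

/-! ### Factors and occurrences in an arbitrary sequence -/

theorem length_factorAt {α : Type*} (u : ℕ → α) (i n : ℕ) : (factorAt u i n).length = n := by
  simp [factorAt]

theorem factorAt_succ {α : Type*} (u : ℕ → α) (i n : ℕ) :
    factorAt u i (n + 1) = u i :: factorAt u (i + 1) n := by
  simp only [factorAt, List.range_succ_eq_map, List.map_cons, List.map_map, Nat.add_zero]
  congr 1
  apply List.map_congr_left
  intro k _
  simp only [Function.comp]
  congr 1
  omega

theorem occursAt_nil {α : Type*} (u : ℕ → α) (i : ℕ) : OccursAt u [] i := by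
  simp [OccursAt, factorAt]

theorem occursAt_cons {α : Type*} (u : ℕ → α) (c : α) (w : List α) (i : ℕ) :
    OccursAt u (c :: w) i ↔ u i = c ∧ OccursAt u w (i + 1) := by
  simp [OccursAt, factorAt_succ]

theorem occursAt_append {α : Type*} (u : ℕ → α) (v w : List α) (i : ℕ) :
    OccursAt u (v ++ w) i ↔ OccursAt u v i ∧ OccursAt u w (i + v.length) := by
  induction v generalizing i with
  | nil => simp [occursAt_nil]
  | cons c v ih =>
    rw [List.cons_append, occursAt_cons, occursAt_cons, ih, List.length_cons, and_assoc,
      show i + 1 + v.length = i + (v.length + 1) by omega]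

theorem occursAt_factorAt {α : Type*} (u : ℕ → α) (i n : ℕ) : OccursAt u (factorAt u i n) i := by
  simp [OccursAt, length_factorAt]

theorem OccursAt.of_isPrefix_word {α : Type*} {u : ℕ → α} {v w : List α} {i : ℕ}
    (h : OccursAt u v i) (hw : w <+: v) : OccursAt u w i := by
  obtain ⟨t, rfl⟩ := hw
  exact ((occursAt_append u w t i).1 h).1

theorem OccursAt.eq_of_length {α : Type*} {u : ℕ → α} {v w : List α} {i : ℕ}
    (hv : OccursAt u v i) (hw : OccursAt u w i) (h : v.length = w.length) : v = w := by
  unfold OccursAt at hv hw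
  rw [← hv, ← hw, h]

theorem OccursAt.isPrefix_word {α : Type*} {u : ℕ → α} {v w : List α} {i : ℕ}
    (hv : OccursAt u v i) (hw : OccursAt u w i) (h : w.length ≤ v.length) : w <+: v := by
  have h1 : v.take w.length = w :=
    (hv.of_isPrefix_word (List.take_prefix _ _)).eq_of_length hw (by simp [h])
  rw [← h1]
  exact List.take_prefix _ _

/-! ### The morphism and its fixed point -/

theorem phiW_cons (c : Bool) (w : List Bool) : phiW (c :: w) = phi c ++ phiW w := by
  simp [phiW]

theorem phiW_append (v w : List Bool) : phiW (v ++ w) = phiW v ++ phiW w := by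
  simp [phiW]

theorem count_false_phiW (w : List Bool) :
    (phiW w).count false = w.count false + w.count true := by
  induction w with
  | nil => rfl
  | cons c w ih => cases c <;> simp [phiW_cons, phi, ih, -List.count_false_add_count_true] <;> omega

theorem count_true_phiW (w : List Bool) : (phiW w).count true = w.count false := by
  induction w with
  | nil => rfl
  | cons c w ih => cases c <;> simp [phiW_cons, phi, ih]

theorem length_le_length_phiW (w : List Bool) : w.length ≤ (phiW w).length := by
  induction w with
  | nil => simp
  | cons c w ih => cases c <;> simp [phiW_cons, phi] <;> omega

theorem phiIter_succ (n : ℕ) : phiIter (n + 1) = phiW (phiIter n) :=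
  Function.iterate_succ_apply' _ _ _

theorem phiW_prefix_phiW {v w : List Bool} (h : v <+: w) : phiW v <+: phiW w := by
  obtain ⟨t, rfl⟩ := h
  rw [phiW_append]
  exact List.prefix_append _ _

theorem phiIter_prefix_succ (n : ℕ) : phiIter n <+: phiIter (n + 1) := by
  induction n with
  | zero => exact ⟨[true], rfl⟩
  | succ n ih =>
    rw [phiIter_succ n, phiIter_succ (n + 1)]
    exact phiW_prefix_phiW ih

theorem phiIter_prefix_of_le {m n : ℕ} (h : m ≤ n) : phiIter m <+: phiIter n := by
  induction n, h using Nat.le_induction with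
  | base => exact List.prefix_rfl
  | succ n _ ih => exact ih.trans (phiIter_prefix_succ n)

/-- Each `φⁿ(a)` begins with `a`, and `φ(a)` is longer than `a`, so the length grows strictly. -/
theorem lt_length_phiIter (n : ℕ) : n < (phiIter n).length := by
  induction n with
  | zero => simp [phiIter]
  | succ n ih =>
    obtain ⟨t, ht⟩ := phiIter_prefix_of_le (Nat.zero_le n)
    have h0 : phiIter 0 = [false] := rfl
    rw [h0] at ht
    rw [phiIter_succ, ← ht]
    rw [← ht] at ih
    have := length_le_length_phiW t
    simp [phiW_cons, phi] at ih ⊢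
    omega

theorem occursAt_phiIter (n : ℕ) : OccursAt fibWord (phiIter n) 0 := by
  apply List.ext_getElem
  · simp [length_factorAt]
  intro k h1 h2
  have hk : k < (phiIter (k + 1)).length := (Nat.lt_succ_self k).trans (lt_length_phiIter (k + 1))
  simp only [factorAt, List.getElem_map, List.getElem_range, fibWord, Nat.zero_add]
  rw [List.getD_eq_getElem _ _ hk]
  rcases le_total (k + 1) n with h | h
  · exact (phiIter_prefix_of_le h).getElem hk
  · exact ((phiIter_prefix_of_le h).getElem h2).symm

/-- `f` is fixed by `φ`, in terms of prefixes. -/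
theorem occursAt_zero_phiW {w : List Bool} (h : OccursAt fibWord w 0) :
    OccursAt fibWord (phiW w) 0 := by
  have h1 : w <+: phiIter w.length :=
    (occursAt_phiIter _).isPrefix_word h (lt_length_phiIter _).le
  have h2 := occursAt_phiIter (w.length + 1)
  rw [phiIter_succ] at h2
  exact h2.of_isPrefix_word (phiW_prefix_phiW h1)

/-! ### Desubstitution -/

/-- The index in the Fibonacci word `f` at which the block `φ(f i)` of
`f = φ(f 0) φ(f 1) ⋯` starts. -/
def pos : ℕ → ℕ
  | 0 => 0
  | i + 1 => pos i + (phi (fibWord i)).length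

theorem factorAt_succ' {α : Type*} (u : ℕ → α) (i n : ℕ) :
    factorAt u i (n + 1) = factorAt u i n ++ [u (i + n)] := by
  simp [factorAt, List.range_succ]

theorem pos_eq (i : ℕ) : pos i = (phiW (factorAt fibWord 0 i)).length := by
  induction i with
  | zero => rfl
  | succ i ih => simp [pos, ih, factorAt_succ', phiW]

theorem occursAt_block (i : ℕ) : OccursAt fibWord (phi (fibWord i)) (pos i) := by
  have h := occursAt_zero_phiW (occursAt_factorAt fibWord 0 (i + 1))
  rw [factorAt_succ', phiW_append, occursAt_append, ← pos_eq] at h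
  simpa [phiW] using h.2

theorem fibWord_pos (i : ℕ) : fibWord (pos i) = false := by
  have h := occursAt_block i
  cases hi : fibWord i <;> rw [hi] at h <;> simp [phi, occursAt_cons] at h
  · exact h.1
  · exact h.1

theorem fibWord_pos_add_one {i : ℕ} (hi : fibWord i = false) : fibWord (pos i + 1) = true := by
  have h := occursAt_block i
  rw [hi] at h
  simp [phi, occursAt_cons] at h
  exact h.2.1

theorem pos_succ_of_false {i : ℕ} (hi : fibWord i = false) : pos (i + 1) = pos i + 2 := by
  simp [pos, hi, phi]

theorem pos_succ_of_true {i : ℕ} (hi : fibWord i = true) : pos (i + 1) = pos i + 1 := by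
  simp [pos, hi, phi]

theorem pos_strictMono : StrictMono pos := by
  apply strictMono_nat_of_lt_succ
  intro i
  cases hi : fibWord i
  · rw [pos_succ_of_false hi]; omega
  · rw [pos_succ_of_true hi]; omega

/-- Every letter `a` of `f` is the first letter of a block. -/
theorem exists_pos_eq {j : ℕ} (hj : fibWord j = false) : ∃ i, pos i = j := by
  have key : ∀ j, ∃ i, pos i = j ∨ (fibWord i = false ∧ pos i + 1 = j) := by
    intro j
    induction j with
    | zero => exact ⟨0, Or.inl rfl⟩
    | succ j ih =>
      obtain ⟨i, rfl | ⟨hi, rfl⟩⟩ := ih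
      · cases hi : fibWord i
        · exact ⟨i, Or.inr ⟨hi, rfl⟩⟩
        · exact ⟨i + 1, Or.inl (pos_succ_of_true hi)⟩
      · exact ⟨i + 1, Or.inl (pos_succ_of_false hi)⟩
  obtain ⟨i, rfl | ⟨hi, rfl⟩⟩ := key j
  · exact ⟨i, rfl⟩
  · rw [fibWord_pos_add_one hi] at hj
    cases hj

/-- `φ(w)a` begins with `a`. -/
theorem exists_phiW_append (w : List Bool) : ∃ t, phiW w ++ [false] = false :: t := by
  cases w with
  | nil => exact ⟨[], rfl⟩
  | cons c w => cases c <;> simp [phiW_cons, phi]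

/-- The trailing `a` of `φ(w)a` is what distinguishes a final block `φ(b) = a` from the beginning
of a block `φ(a) = ab`. -/
theorem occursAt_phiW_pos (w : List Bool) (i : ℕ) :
    OccursAt fibWord (phiW w ++ [false]) (pos i) ↔ OccursAt fibWord w i := by
  induction w generalizing i with
  | nil => simp [phiW, occursAt_cons, occursAt_nil, fibWord_pos]
  | cons c w ih =>
    obtain ⟨t, ht⟩ := exists_phiW_append w
    have h0 := fibWord_pos i
    rw [occursAt_cons, ← ih (i + 1)]
    cases hi : fibWord i
    · have h1 := fibWord_pos_add_one hi
      rw [pos_succ_of_false hi]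
      cases c
      · simp [phiW_cons, phi, occursAt_cons, h0, h1]
      · simp [phiW_cons, phi, occursAt_cons, h0, ht, h1]
    · have h1 := fibWord_pos (i + 1)
      rw [pos_succ_of_true hi] at h1 ⊢
      cases c
      · simp [phiW_cons, phi, occursAt_cons, h0, h1]
      · simp [phiW_cons, phi, occursAt_cons, h0]

theorem occursAt_phiW_iff (w : List Bool) (j : ℕ) :
    OccursAt fibWord (phiW w ++ [false]) j ↔ ∃ i, pos i = j ∧ OccursAt fibWord w i := by
  constructor
  · intro h
    obtain ⟨t, ht⟩ := exists_phiW_append w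
    obtain ⟨i, rfl⟩ := exists_pos_eq (j := j) (by rw [ht, occursAt_cons] at h; exact h.1)
    exact ⟨i, rfl, (occursAt_phiW_pos w i).1 h⟩
  · rintro ⟨i, rfl, h⟩
    exact (occursAt_phiW_pos w i).2 h

theorem phiW_factorAt (i n : ℕ) :
    phiW (factorAt fibWord i n) = factorAt fibWord (pos i) (pos (i + n) - pos i) := by
  have h1 : OccursAt fibWord (phiW (factorAt fibWord i n)) (pos i) :=
    ((occursAt_phiW_pos _ i).2 (occursAt_factorAt _ i n)).of_isPrefix_word (List.prefix_append _ _)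
  have h2 : pos (i + n) = pos i + (phiW (factorAt fibWord i n)).length := by
    clear h1
    induction n with
    | zero => rfl
    | succ n ih =>
      rw [← Nat.add_assoc, pos, ih, factorAt_succ', phiW_append]
      simp [phiW, Nat.add_assoc]
  rw [h2, Nat.add_sub_cancel_left]
  exact h1.symm

/-! ### Return words and special extensions under the morphism -/

theorem isReturnWordAt_phiW {w v : List Bool} {i : ℕ} (h : IsReturnWordAt fibWord w v i) :
    IsReturnWordAt fibWord (phiW w ++ [false]) (phiW v) (pos i) := by
  obtain ⟨j, hij, hi, hj, hno, rfl⟩ := h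
  refine ⟨pos j, pos_strictMono hij, (occursAt_phiW_pos w i).2 hi, (occursAt_phiW_pos w j).2 hj,
    ?_, ?_⟩
  · intro m h1 h2 hm
    obtain ⟨k, rfl, hk⟩ := (occursAt_phiW_iff w m).1 hm
    exact hno k (pos_strictMono.lt_iff_lt.1 h1) (pos_strictMono.lt_iff_lt.1 h2) hk
  · rw [phiW_factorAt, Nat.add_sub_cancel' hij.le]

theorem exists_returnWord_of_phiW {w v : List Bool}
    (h : IsReturnWord fibWord (phiW w ++ [false]) v) :
    ∃ v', IsReturnWord fibWord w v' ∧ v = phiW v' := by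
  obtain ⟨_, _, hij, hi, hj, hno, rfl⟩ := h
  obtain ⟨i, rfl, hi'⟩ := (occursAt_phiW_iff w _).1 hi
  obtain ⟨j, rfl, hj'⟩ := (occursAt_phiW_iff w _).1 hj
  have hij' : i < j := pos_strictMono.lt_iff_lt.1 hij
  refine ⟨factorAt fibWord i (j - i), ⟨i, j, hij', hi', hj', ?_, rfl⟩, ?_⟩
  · intro m h1 h2 hm
    exact hno (pos m) (pos_strictMono h1) (pos_strictMono h2) ((occursAt_phiW_pos w m).2 hm)
  · rw [phiW_factorAt, Nat.add_sub_cancel' hij'.le]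

theorem IsFactor.of_append {α : Type*} {u : ℕ → α} {w v s t : List α} (h : IsFactor u v)
    (e : v = s ++ w ++ t) : IsFactor u w := by
  obtain ⟨i, hi⟩ := h
  rw [e, occursAt_append, occursAt_append] at hi
  exact ⟨_, hi.1.2⟩

theorem IsFactor.phiW {w : List Bool} (h : IsFactor fibWord w) :
    IsFactor fibWord (phiW w ++ [false]) := by
  obtain ⟨i, hi⟩ := h
  exact ⟨pos i, (occursAt_phiW_pos w i).2 hi⟩

theorem bN_extensions (N : ℕ) (c : Bool) :
    IsFactor fibWord (bN N ++ [c]) ∧ IsFactor fibWord (c :: bN N) := by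
  induction N generalizing c with
  | zero =>
    suffices IsFactor fibWord [c] from ⟨this, this⟩
    -- `a` and `b` are the first two letters of `f`
    cases c
    · exact ⟨0, rfl⟩
    · exact ⟨1, rfl⟩
  | succ N ih =>
    obtain ⟨h1, h2⟩ := ih (!c)
    constructor
    · -- `φ(b_N a)a = b_{N+1} b a` and `φ(b_N b)a = b_{N+1} a`
      cases c
      · exact h1.phiW.of_append (s := []) (t := []) (by simp [bN, phiW, phi])
      · exact h1.phiW.of_append (s := []) (t := [false]) (by simp [bN, phiW, phi])
    · -- `φ(a b_N)a = a b b_{N+1}` and `φ(b b_N)a = a b_{N+1}`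
      cases c
      · exact h2.phiW.of_append (s := []) (t := []) (by simp [bN, phiW_cons, phi])
      · exact h2.phiW.of_append (s := [false]) (t := []) (by simp [bN, phiW_cons, phi])

theorem occursAt_bN_zero (N : ℕ) : OccursAt fibWord (bN N) 0 := by
  induction N with
  | zero => exact occursAt_nil _ _
  | succ N ih => exact (occursAt_phiW_pos (bN N) 0).2 ih

theorem count_bN (N : ℕ) :
    (bN N).count false + 1 = Nat.fib (N + 2) ∧ (bN N).count true + 1 = Nat.fib (N + 1) := by
  induction N with
  | zero => simp [bN]
  | succ N ih =>
    have h : Nat.fib (N + 1 + 2) = Nat.fib (N + 1) + Nat.fib (N + 2) := Nat.fib_add_two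
    simp only [bN, List.count_append, count_false_phiW, count_true_phiW]
    simp only [List.count_singleton_self, List.count_singleton, show N + 1 + 1 = N + 2 from rfl]
    simp [-List.count_false_add_count_true]
    omega

/-- The Parikh vectors of the return words, for all `N ≥ 0`: for `N = 0` the return words to the
empty word are `a` and `b`, so `F_{N-1}` has to be read as `F_{N+1} - F_N`, that is `F_{-1} = 1`. -/
theorem returnWords_bN (N : ℕ) :
    ∃ r : List Bool, IsReturnWordAt fibWord (bN N) r 0 ∧
      r.count false = Nat.fib (N + 1) ∧ r.count true = Nat.fib N ∧
      ∀ v : List Bool, IsReturnWord fibWord (bN N) v → v ≠ r →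
        v.count false = Nat.fib N ∧ v.count true + Nat.fib N = Nat.fib (N + 1) := by
  induction N with
  | zero =>
    refine ⟨[false], ⟨1, one_pos, occursAt_nil _ _, occursAt_nil _ _, ?_, rfl⟩, rfl, rfl, ?_⟩
    · intro m h1 h2
      omega
    · rintro v ⟨i, j, hij, -, -, hno, rfl⟩ hv
      have hj : j = i + 1 := by
        by_contra hne
        exact hno (i + 1) (by omega) (by omega) (occursAt_nil _ _)
      subst hj
      have e : factorAt fibWord i (i + 1 - i) = [fibWord i] := by simp [factorAt]
      rw [e] at hv ⊢
      cases hi : fibWord i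
      · exact absurd (by rw [hi]) hv
      · simp
  | succ N ih =>
    obtain ⟨r, hr, ha, hb, hv⟩ := ih
    have hf : Nat.fib (N + 1 + 1) = Nat.fib N + Nat.fib (N + 1) := Nat.fib_add_two
    refine ⟨phiW r, isReturnWordAt_phiW hr, ?_, ?_, ?_⟩
    · rw [count_false_phiW]; omega
    · rw [count_true_phiW, ha]
    · intro v h hne
      obtain ⟨v', h', rfl⟩ := exists_returnWord_of_phiW h
      obtain ⟨h1, h2⟩ := hv v' h' (by rintro rfl; exact hne rfl)
      rw [count_false_phiW, count_true_phiW]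
      omega

/-- for N ≥ 1, b_N is a bispecial prefix of the Fibonacci word with
Parikh vector (F_{N+2} − 1, F_{N+1} − 1); its prefix return word r_N has Parikh vector
(F_{N+1}, F_N), and every other return word to b_N has Parikh vector (F_N, F_{N-1}). -/
theorem bispecial_and_return_word_parikh (N : ℕ) (hN : 1 ≤ N) :
    OccursAt fibWord (bN N) 0 ∧ IsBispecial fibWord (bN N) ∧
    (bN N).count false = Nat.fib (N + 2) - 1 ∧
    (bN N).count true = Nat.fib (N + 1) - 1 ∧
    ∃ r : List Bool, IsReturnWordAt fibWord (bN N) r 0 ∧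
      r.count false = Nat.fib (N + 1) ∧ r.count true = Nat.fib N ∧
      ∀ v : List Bool, IsReturnWord fibWord (bN N) v → v ≠ r →
        v.count false = Nat.fib N ∧ v.count true = Nat.fib (N - 1) := by
  obtain ⟨h1, h2⟩ := count_bN N
  obtain ⟨r, hr, ha, hb, hv⟩ := returnWords_bN N
  refine ⟨occursAt_bN_zero N, ⟨⟨0, occursAt_bN_zero N⟩,
    ⟨false, true, by decide, (bN_extensions N false).1, (bN_extensions N true).1⟩,
    ⟨false, true, by decide, (bN_extensions N false).2, (bN_extensions N true).2⟩⟩,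
    by omega, by omega, r, hr, ha, hb, ?_⟩
  intro v h hne
  obtain ⟨h3, h4⟩ := hv v h hne
  obtain ⟨M, rfl⟩ : ∃ M, N = M + 1 := ⟨N - 1, by omega⟩
  have hf : Nat.fib (M + 1 + 1) = Nat.fib M + Nat.fib (M + 1) := Nat.fib_add_two
  refine ⟨h3, ?_⟩
  rw [Nat.add_sub_cancel]
  omega
end

section
/- Let δ ≥ 1 and H = 2^{δ−1}. Let w be a factor of v_δ such that π(w) contains at least H letters a and at least H letters b, and let v be a return word to w in v_δ. Then H divides |π(v)|_a and H divides |π(v)|_b. -/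
/-!
The index of a letter `1` (or `1̂`) in `v_δ`, counted among the letters of the same kind, is a
multiple of `H = 2^(δ-1)`, since `y_δ` takes the value `1` exactly at the multiples of `H`
(`yseq_eq_one_iff`). A word `w` with at least `H` letters of a kind `c` must contain the marked
letter of that kind, say at offset `t` (`exists_mark`). If `w` occurs at `i` and at `j`, then the
number of letters `c` before `i + t` and before `j + t` are both multiples of `H`; as the first `t`
letters of `w` contribute equally to both, the numbers of letters `c` before `i` and before `j`
are congruent modulo `H`, and their difference is the number of letters `c` in the return word.
-/

open Filter

/-- The constant gap sequence y_δ over {1,…,δ}: y_δ(i) = 1 if 2^(δ-1) ∣ i,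
and y_δ(i) = δ - ν₂(i) otherwise (ν₂ = 2-adic valuation). -/
def yseq (δ : ℕ) (i : ℕ) : ℕ :=
  if 2 ^ (δ - 1) ∣ i then 1 else δ - padicValNat 2 i

/-- Number of occurrences of the letter `c` among `u 0, …, u (i-1)`. -/
def countLetter (u : ℕ → Bool) (c : Bool) (i : ℕ) : ℕ :=
  (List.range i).countP fun k => u k == c

/-- The colouring v_δ of the Fibonacci word by y_δ and its hatted copy ŷ_δ:
`Sum.inl k` encodes the letter k ∈ {1,…,δ} and `Sum.inr k` the hatted letter k̂. -/
def vdelta (δ : ℕ) (i : ℕ) : ℕ ⊕ ℕ :=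
  if fibWord i = false then Sum.inl (yseq δ (countLetter fibWord false i))
  else Sum.inr (yseq δ (countLetter fibWord true i))

/-- The discolouration map π sending each unhatted letter to a (= `false`) and each
hatted letter to b (= `true`); thus π(v_δ) = f letterwise. -/
def piMap : ℕ ⊕ ℕ → Bool := Sum.elim (fun _ => false) (fun _ => true)

/-- Off the multiples of `2^(δ-1)` the 2-adic valuation is at most `δ - 2`, so the truncated
subtraction in `yseq` yields a value at least `2`. -/
theorem yseq_eq_one_iff {δ : ℕ} (k : ℕ) : yseq δ k = 1 ↔ 2 ^ (δ - 1) ∣ k := by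
  unfold yseq
  split_ifs with h
  · simp [h]
  · simp only [h, iff_false]
    have hk : k ≠ 0 := by rintro rfl; simp at h
    rw [padicValNat_dvd_iff_le hk] at h
    omega

theorem countLetter_succ (u : ℕ → Bool) (c : Bool) (i : ℕ) :
    countLetter u c (i + 1) = countLetter u c i + if u i = c then 1 else 0 := by
  simp [countLetter, List.range_succ, List.countP_append, List.countP_cons]

theorem piMap_vdelta (δ k : ℕ) : piMap (vdelta δ k) = fibWord k := by
  unfold vdelta piMap
  split_ifs with h <;> simp_all

/-- Forgetting the hat, the `k`-th letter of `v_δ` is the value of `y_δ` at the number of earlier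
letters of the same kind. -/
theorem elim_vdelta (δ k : ℕ) :
    Sum.elim id id (vdelta δ k) = yseq δ (countLetter fibWord (fibWord k) k) := by
  unfold vdelta
  split_ifs with h <;> simp_all

theorem count_factorAt (δ : ℕ) (c : Bool) (i n : ℕ) :
    countLetter fibWord c (i + n) =
      countLetter fibWord c i + ((factorAt (vdelta δ) i n).map piMap).count c := by
  induction n with
  | zero => simp [factorAt]
  | succ n ih =>
    rw [← add_assoc, countLetter_succ, ih]
    simp [factorAt, List.range_succ, piMap_vdelta, List.count_singleton, add_assoc]

/-- Every value `K` in the range of the counting function over `[i, i + n)` is attained at a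
position carrying the letter `c`, because the function grows by one exactly at such positions. -/
theorem exists_mark (u : ℕ → Bool) (c : Bool) (i n K : ℕ) (h1 : countLetter u c i ≤ K)
    (h2 : K < countLetter u c (i + n)) :
    ∃ t < n, u (i + t) = c ∧ countLetter u c (i + t) = K := by
  induction n with
  | zero => simp at h2; omega
  | succ n ih =>
    by_cases h : K < countLetter u c (i + n)
    · obtain ⟨t, ht, h'⟩ := ih h
      exact ⟨t, by omega, h'⟩
    · rw [← add_assoc, countLetter_succ] at h2
      split_ifs at h2 with hu
      · exact ⟨n, by omega, hu, by omega⟩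
      · omega

theorem factorAt_take {α : Type*} (u : ℕ → α) (i n t : ℕ) (h : t ≤ n) :
    (factorAt u i n).take t = factorAt u i t := by
  simp [factorAt, ← List.map_take, List.take_range, h]

theorem factorAt_eq_apply {α : Type*} {u : ℕ → α} {i j n : ℕ}
    (h : factorAt u i n = factorAt u j n) {t : ℕ} (ht : t < n) : u (i + t) = u (j + t) := by
  simp only [factorAt, List.map_inj_left, List.mem_range] at h
  exact h t ht

theorem dvd_count_of_occursAt (δ : ℕ) (c : Bool) (w : List (ℕ ⊕ ℕ)) (i j : ℕ) (hij : i < j)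
    (hc : 2 ^ (δ - 1) ≤ (w.map piMap).count c)
    (hi : OccursAt (vdelta δ) w i) (hj : OccursAt (vdelta δ) w j) :
    2 ^ (δ - 1) ∣ ((factorAt (vdelta δ) i (j - i)).map piMap).count c := by
  unfold OccursAt at hi hj
  have hlen := count_factorAt δ c i w.length
  rw [hi] at hlen
  set H := 2 ^ (δ - 1) with hH
  have hpos : 0 < H := by positivity
  -- the least multiple of `H` that is at least the number of letters `c` before `i`
  obtain ⟨K, hK, hK1, hK2⟩ : ∃ K, H ∣ K ∧ countLetter fibWord c i ≤ K ∧
      K < countLetter fibWord c i + H := by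
    refine ⟨H * ((countLetter fibWord c i + (H - 1)) / H), dvd_mul_right _ _, ?_, ?_⟩
    · have h1 := Nat.div_add_mod (countLetter fibWord c i + (H - 1)) H
      have h2 := Nat.mod_lt (countLetter fibWord c i + (H - 1)) hpos
      omega
    · have h1 := Nat.mul_div_le (countLetter fibWord c i + (H - 1)) H
      omega
  obtain ⟨t, ht, hft, hCt⟩ := exists_mark fibWord c i w.length K hK1 (by omega)
  have hw := hi.trans hj.symm
  have hv := factorAt_eq_apply hw ht
  have hfj : fibWord (j + t) = c := by
    rw [← piMap_vdelta δ, ← hv, piMap_vdelta, hft]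
  have hy : yseq δ (countLetter fibWord c (j + t)) = yseq δ K := by
    have := congrArg (Sum.elim id id) hv
    rw [elim_vdelta, elim_vdelta, hft, hfj, hCt] at this
    exact this.symm
  have hdj : H ∣ countLetter fibWord c (j + t) := by
    rw [← yseq_eq_one_iff, hy, yseq_eq_one_iff]
    exact hK
  have hti := count_factorAt δ c i t
  have htj := count_factorAt δ c j t
  have hpre : factorAt (vdelta δ) i t = factorAt (vdelta δ) j t := by
    rw [← factorAt_take _ i _ t ht.le, hw, factorAt_take _ j _ t ht.le]
  have hr := count_factorAt δ c i (j - i)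
  rw [Nat.add_sub_cancel' hij.le] at hr
  rw [← hpre] at htj
  have hsum : countLetter fibWord c (j + t) =
      K + ((factorAt (vdelta δ) i (j - i)).map piMap).count c := by omega
  exact (Nat.dvd_add_right hK).mp (hsum ▸ hdj)

/-- if w is a factor of v_δ whose discolouration contains at least
H = 2^(δ-1) letters a and at least H letters b, then for every return word v to w
in v_δ, H divides |π(v)|_a and H divides |π(v)|_b. -/
theorem return_word_counts_divisible (δ : ℕ) (hδ : 1 ≤ δ) (w v : List (ℕ ⊕ ℕ))
    (hw : IsFactor (vdelta δ) w)
    (ha : 2 ^ (δ - 1) ≤ (w.map piMap).count false)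
    (hb : 2 ^ (δ - 1) ≤ (w.map piMap).count true)
    (hv : IsReturnWord (vdelta δ) w v) :
    2 ^ (δ - 1) ∣ (v.map piMap).count false ∧
    2 ^ (δ - 1) ∣ (v.map piMap).count true := by
  obtain ⟨i, j, hij, hi, hj, -, rfl⟩ := hv
  exact ⟨dvd_count_of_occursAt δ false w i j hij ha hi hj,
    dvd_count_of_occursAt δ true w i j hij hb hi hj⟩
end
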